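/- Fix n > 3. For each i : Fin n let Q_i be the permutation of states (Fin n → ZMod 2) that replaces y_i by 1 + y_{i−1} + y_i + y_{i+1} and leaves all other coordinates unchanged (the Wolfram rule 105 local function at i; each Q_i is an involution). Let G₁₀₅ be the subgroup of the permutation group of (Fin n → ZMod 2) generated by {Q_i ∣ i : Fin n}. Then the order of G₁₀₅ equals 2^{n−1}·n! when 4 does not divide n, and equals 2^{n−2}·n! when 4 divides n. -/

import Mathlib

/-!
In the coordinates `d j = y j + y (j + 1) + j`, the update `Q i` transposes the entries `i - 1` and
`i`; for `i = 0` it also adds `n` to both, since the level `j` drops by `n - 1` instead of rising by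
`1` between `n - 1` and `0`. The vector `d` determines `y` up to complement, and one more bit
distinguishes `y` from its complement: the invariant `∑ j, y j * y (j + 1)` for odd `n`, and `y 0`
for even `n`. In both cases `Q i` acts on `d` and this bit as a signed permutation, namely as one of
the reflections generating the group of signed permutations with an even number of sign changes (the
Weyl group of type `D`), which has order `2 ^ (n - 1) * n !`. A signed permutation fixing all states
is `1` or `-1`, and `-1` fixes them exactly when `n` and `∑ j, d j = n * (n - 1) / 2` are both even,
that is, when `4 ∣ n`.
-/

open Equiv Finset Multiplicative SemidirectProduct

theorem card_closure_range_eq_relIndex {W X Y I : Type*} [Group W] [MulAction W X] {f : Y → X}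
    (hf : Function.Injective f) (g : I → W) (Q : I → Perm Y)
    (hQ : ∀ i y, f (Q i y) = g i • f y) :
    Nat.card (Subgroup.closure (Set.range Q))
      = (fixingSubgroup W (Set.range f)).relIndex (Subgroup.closure (Set.range g)) := by
  -- The pairs `(g i, Q i)` generate a subgroup projecting onto both groups; since `f` is injective,
  -- the kernel of the projection to `Perm Y` is cut out by the fixing subgroup.
  set P := Subgroup.closure (Set.range fun i ↦ (g i, Q i)) with hP
  have map_fst : P.map (MonoidHom.fst W (Perm Y)) = Subgroup.closure (Set.range g) := by
    rw [hP, MonoidHom.map_closure, ← Set.range_comp]; rfl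
  have map_snd : P.map (MonoidHom.snd W (Perm Y)) = Subgroup.closure (Set.range Q) := by
    rw [hP, MonoidHom.map_closure, ← Set.range_comp]; rfl
  have equivariant : ∀ p ∈ P, ∀ y, f (p.2 y) = p.1 • f y := by
    intro p hp
    induction hp using Subgroup.closure_induction with
    | mem p hp => obtain ⟨i, rfl⟩ := hp; exact hQ i
    | one => simp
    | mul p q _ _ hp hq => simp [hp, hq, mul_smul]
    | inv p _ hp => intro y; simp [eq_inv_smul_iff, ← hp]
  have ker_inf : (MonoidHom.snd W (Perm Y)).ker ⊓ P
      = (fixingSubgroup W (Set.range f)).comap (MonoidHom.fst W (Perm Y)) ⊓ P := by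
    ext p
    refine and_congr_left fun hp ↦ ?_
    change p ∈ MonoidHom.ker _ ↔ p ∈ Subgroup.comap _ _
    rw [MonoidHom.mem_ker, Subgroup.mem_comap, mem_fixingSubgroup_iff]
    simp [← equivariant p hp, hf.eq_iff, Perm.ext_iff]
  rw [← map_snd, ← Subgroup.relIndex_ker, ← Subgroup.inf_relIndex_right, ker_inf,
    Subgroup.inf_relIndex_right, Subgroup.relIndex_comap, map_fst]

/-- The group of monomial `ι × ι` matrices with nonzero entries in the group `M`: the element
`⟨v, σ⟩` has the entry `v j` in row `j` and column `σ⁻¹ j`. -/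
abbrev MonomialGroup (ι M : Type*) [Group M] : Type _ :=
  (ι → M) ⋊[(mulAutArrow : Perm ι →* MulAut (ι → M))] Perm ι

namespace MonomialGroup

variable {ι M : Type*} [Fintype ι] [CommGroup M]

/-- The product of the nonzero entries of a monomial matrix. -/
def entryProd : MonomialGroup ι M →* M where
  toFun w := ∏ j, w.left j
  map_one' := by simp
  map_mul' a b := by
    simp only [mul_left, Pi.mul_apply, Finset.prod_mul_distrib]
    congr 1
    exact Equiv.prod_comp a.right⁻¹ b.left

theorem mem_ker_entryProd {w : MonomialGroup ι M} :
    w ∈ (entryProd : MonomialGroup ι M →* M).ker ↔ ∏ j, w.left j = 1 := Iff.rfl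

theorem entryProd_surjective [Nonempty ι] :
    Function.Surjective (entryProd : MonomialGroup ι M →* M) := by
  classical exact fun x ↦ ⟨inl (Pi.mulSingle (Classical.arbitrary ι) x), by simp [entryProd]⟩

theorem card_mul_card_ker_entryProd [Nonempty ι] :
    Nat.card M * Nat.card (entryProd : MonomialGroup ι M →* M).ker
      = Nat.card M ^ Fintype.card ι * (Fintype.card ι).factorial := by
  have h := (entryProd : MonomialGroup ι M →* M).ker.index_mul_card
  rw [Subgroup.index_ker, MonoidHom.range_eq_top.2 entryProd_surjective, Subgroup.card_top] at h
  rwa [SemidirectProduct.card, Nat.card_fun, Nat.card_perm, Nat.card_eq_fintype_card (α := ι)] at h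

variable [DecidableEq ι]

theorem ker_entryProd_le {H : Subgroup (MonomialGroup ι M)} (hperm : ∀ σ : Perm ι, inr σ ∈ H)
    {a b : ι} (hab : a ≠ b) (hpair : ∀ x : M, inl (Pi.mulSingle a x * Pi.mulSingle b x⁻¹) ∈ H) :
    (entryProd : MonomialGroup ι M →* M).ker ≤ H := by
  have pair_mem (j : ι) (x : M) : inl (Pi.mulSingle j x * Pi.mulSingle b x⁻¹) ∈ H := by
    rcases eq_or_ne j b with rfl | hjb
    · simp [← Pi.mulSingle_mul, H.one_mem]
    · have conj_mem := H.mul_mem (H.mul_mem (hperm (swap a j)) (hpair x)) (hperm (swap a j)⁻¹)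
      have permute : mulAutArrow (swap a j) (Pi.mulSingle a x * Pi.mulSingle b x⁻¹ : ι → M)
          = Pi.mulSingle a x ∘ swap a j * Pi.mulSingle b x⁻¹ ∘ swap a j := rfl
      rwa [← inl_aut, permute, Pi.mulSingle_comp_equiv, Pi.mulSingle_comp_equiv, symm_swap,
        swap_apply_left, swap_apply_of_ne_of_ne hab.symm hjb.symm] at conj_mem
  intro w hw
  have left_eq : w.left = ∏ j, Pi.mulSingle j (w.left j) * Pi.mulSingle b (w.left j)⁻¹ := by
    have prod_inv : ∏ j, Pi.mulSingle (M := fun _ ↦ M) b (w.left j)⁻¹ = 1 := by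
      change ∏ j, MonoidHom.mulSingle (fun _ : ι ↦ M) b (w.left j)⁻¹ = 1
      rw [← map_prod, Finset.prod_inv_distrib, mem_ker_entryProd.1 hw, inv_one, map_one]
    rw [Finset.prod_mul_distrib, Finset.univ_prod_mulSingle, prod_inv, mul_one]
  rw [← inl_left_mul_inr_right w, left_eq]
  refine H.mul_mem ?_ (hperm w.right)
  exact (H.comap inl).prod_mem fun j _ ↦ pair_mem j (w.left j)

end MonomialGroup

theorem add_one_mul_self_zmod_two : ∀ m : ZMod 2, (m + 1) * m = 0 := by decide

theorem four_dvd_iff_cast_zmod_two {n : ℕ} :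
    4 ∣ n ↔ (n : ZMod 2) = 0 ∧ ((n * (n - 1) / 2 : ℕ) : ZMod 2) = 0 := by
  simp only [ZMod.natCast_eq_zero_iff]
  constructor
  · rintro ⟨k, rfl⟩
    refine ⟨⟨2 * k, by ring⟩, k * (4 * k - 1), ?_⟩
    rw [show 4 * k * (4 * k - 1) = 2 * (2 * (k * (4 * k - 1))) by ring,
      Nat.mul_div_cancel_left _ two_pos]
  · rintro ⟨⟨k, rfl⟩, h⟩
    rw [mul_assoc, Nat.mul_div_cancel_left _ two_pos, Nat.prime_two.dvd_mul] at h
    omega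

section Fin

variable {n : ℕ} [NeZero n]

theorem fin_one_ne_zero (hn : 1 < n) : (1 : Fin n) ≠ 0 := by
  rw [Ne, Fin.ext_iff, Fin.val_one', Nat.mod_eq_of_lt hn]
  exact one_ne_zero

theorem sub_one_ne_self (hn : 1 < n) (i : Fin n) : i - 1 ≠ i :=
  sub_eq_self.not.2 (fin_one_ne_zero hn)

theorem cast_val_sub_one (i : Fin n) :
    ((i - 1 : Fin n).val : ZMod 2) + i.val + 1 = if i = 0 then (n : ZMod 2) else 0 := by
  split_ifs with hi
  · subst hi
    obtain ⟨m, rfl⟩ := Nat.exists_eq_succ_of_ne_zero (NeZero.ne n)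
    simp
  · rw [Fin.val_sub_one_of_ne_zero hi, Nat.cast_pred (Fin.pos_iff_ne_zero.2 hi)]
    linear_combination i.val * CharTwo.two_eq_zero (R := ZMod 2)

theorem sum_apply_add_one (y : Fin n → ZMod 2) : ∑ j, y (j + 1) = ∑ j, y j :=
  Equiv.sum_comp (Equiv.addRight 1) y

theorem eq_apply_zero_of_forall_eq_sub_one {α : Type*} {f : Fin n → α}
    (h : ∀ k, f k = f (k - 1)) (k : Fin n) : f k = f 0 := by
  obtain ⟨m, rfl⟩ := Nat.exists_eq_succ_of_ne_zero (NeZero.ne n)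
  induction k using Fin.induction with
  | zero => rfl
  | succ k ih => rw [h, ← ih, ← Fin.coeSucc_eq_succ, add_sub_cancel_right]

end Fin

/-- The group of signed permutations of `Fin n` (the Weyl group of type `B`), with the signs
written additively in `ZMod 2`. -/
abbrev SignedPerm (n : ℕ) : Type := MonomialGroup (Fin n) (Multiplicative (ZMod 2))

section SignedPerm

variable {n : ℕ}

/-- The central signed permutation `-1`, which changes all signs. -/
def negOne : SignedPerm n := inl fun _ ↦ ofAdd 1

theorem negOne_mem_ker_entryProd (hn : Even n) :
    negOne ∈ (MonomialGroup.entryProd : SignedPerm n →* _).ker := by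
  have ofAdd_pow : (ofAdd 1 : Multiplicative (ZMod 2)) ^ n = 1 := by
    rw [← ofAdd_nsmul, nsmul_one, (ZMod.natCast_eq_zero_iff_even).2 hn, ofAdd_zero]
  rw [MonomialGroup.mem_ker_entryProd]
  simpa [negOne] using ofAdd_pow

variable [NeZero n]

theorem orderOf_negOne : orderOf (negOne : SignedPerm n) = 2 := by
  have sq_eq_one : (fun _ ↦ ofAdd 1 : Fin n → Multiplicative (ZMod 2)) ^ 2 = 1 :=
    funext fun _ ↦ (by decide : ofAdd (1 : ZMod 2) ^ 2 = 1)
  rw [negOne, orderOf_injective inl inl_injective]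
  refine orderOf_eq_prime sq_eq_one fun h ↦ ?_
  exact (by decide : ofAdd (1 : ZMod 2) ≠ 1) (congrFun h 0)

/-- The adjacent transposition of `i - 1` and `i`, with both signs changed when `i = 0`: the simple
reflections of type `A` together with the reflection in the root `e (n - 1) + e 0`, which generate
the Weyl group of type `D`. -/
def reflection (i : Fin n) : SignedPerm n :=
  ⟨if i = 0 then Pi.mulSingle (i - 1) (ofAdd 1) * Pi.mulSingle i (ofAdd 1) else 1, swap (i - 1) i⟩

theorem reflection_succ {m : ℕ} (i : Fin m) :
    reflection i.succ = inr (swap i.castSucc i.succ) := by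
  have pred_eq : i.succ - 1 = i.castSucc := by rw [sub_eq_iff_eq_add, Fin.coeSucc_eq_succ]
  simp [reflection, pred_eq, Fin.succ_ne_zero]

theorem reflection_zero_mul_inr :
    reflection (0 : Fin n) * inr (swap (0 - 1) 0)
      = inl (Pi.mulSingle (0 - 1 : Fin n) (ofAdd 1) * Pi.mulSingle (0 : Fin n) (ofAdd 1)) := by
  ext1 <;> simp [reflection]

theorem toAdd_left_reflection (i j : Fin n) :
    toAdd ((reflection i).left j)
      = if i = 0 then (if j = i - 1 then 1 else 0) + (if j = i then 1 else 0) else 0 := by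
  split_ifs <;> simp_all [reflection, Pi.mulSingle_apply]

theorem reflection_mem_ker_entryProd (i : Fin n) :
    reflection i ∈ (MonomialGroup.entryProd : SignedPerm n →* _).ker := by
  rw [MonomialGroup.mem_ker_entryProd]
  unfold reflection
  split_ifs
  · have double_flip : ofAdd (1 : ZMod 2) * ofAdd 1 = 1 := rfl
    simpa [prod_mul_distrib] using double_flip
  · simp

theorem inr_mem_closure_reflection (σ : Perm (Fin n)) :
    inr σ ∈ Subgroup.closure (Set.range (reflection (n := n))) := by
  obtain ⟨m, rfl⟩ := Nat.exists_eq_succ_of_ne_zero (NeZero.ne n)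
  have adjacent_le : Submonoid.closure (Set.range fun i : Fin m ↦ swap i.castSucc i.succ)
      ≤ ((Subgroup.closure (Set.range reflection)).comap inr).toSubmonoid := by
    rw [Submonoid.closure_le]
    rintro _ ⟨i, rfl⟩
    exact Subgroup.subset_closure ⟨i.succ, reflection_succ i⟩
  rw [Perm.mclosure_swap_castSucc_succ] at adjacent_le
  exact adjacent_le (Submonoid.mem_top σ)

theorem closure_range_reflection (hn : 1 < n) :
    Subgroup.closure (Set.range (reflection (n := n))) = MonomialGroup.entryProd.ker := by
  apply le_antisymm
  · rw [Subgroup.closure_le]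
    rintro _ ⟨i, rfl⟩
    exact reflection_mem_ker_entryProd i
  · refine MonomialGroup.ker_entryProd_le inr_mem_closure_reflection
      (sub_one_ne_self hn 0) fun x ↦ ?_
    rcases (by decide : ∀ x : Multiplicative (ZMod 2), x = 1 ∨ x = ofAdd 1) x with rfl | rfl
    · simp
    · have inv_eq : (ofAdd 1 : Multiplicative (ZMod 2))⁻¹ = ofAdd 1 := rfl
      rw [inv_eq, ← reflection_zero_mul_inr]
      exact Subgroup.mul_mem _ (Subgroup.subset_closure ⟨0, rfl⟩) (inr_mem_closure_reflection _)

theorem card_closure_range_reflection (hn : 1 < n) :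
    Nat.card (Subgroup.closure (Set.range (reflection (n := n)))) = 2 ^ (n - 1) * n.factorial := by
  have h := MonomialGroup.card_mul_card_ker_entryProd (ι := Fin n) (M := Multiplicative (ZMod 2))
  rw [closure_range_reflection hn]
  rw [Nat.card_eq_fintype_card (α := Multiplicative (ZMod 2)), Fintype.card_multiplicative,
    ZMod.card, Fintype.card_fin, ← mul_pow_sub_one (NeZero.ne n), mul_assoc] at h
  exact Nat.eq_of_mul_eq_mul_left two_pos h

end SignedPerm

/-- Coordinates on states in which rule 105 acts through signed permutations: `diff` stands for the
sums of neighbouring entries, which determine a state up to complement, and `phase` for a bit that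
distinguishes a state from its complement. -/
@[ext]
structure Profile (n : ℕ) where
  diff : Fin n → ZMod 2
  phase : ZMod 2

namespace Profile

variable {n : ℕ}

/-- Signed permutations permute `diff`; the factors `n` and `n + 1` in `ZMod 2` select the parity of
`n`. For odd `n` the signs are added to `diff`; for even `n` they only act by adding to `phase`
their pairing with the permuted `diff`. -/
instance : SMul (SignedPerm n) (Profile n) where
  smul w x := ⟨fun j ↦ x.diff (w.right⁻¹ j) + n * toAdd (w.left j),
    x.phase + (n + 1) * ∑ j, toAdd (w.left j) * x.diff (w.right⁻¹ j)⟩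

theorem diff_smul (w : SignedPerm n) (x : Profile n) (j : Fin n) :
    (w • x).diff j = x.diff (w.right⁻¹ j) + n * toAdd (w.left j) := rfl

theorem phase_smul (w : SignedPerm n) (x : Profile n) :
    (w • x).phase = x.phase + (n + 1) * ∑ j, toAdd (w.left j) * x.diff (w.right⁻¹ j) := rfl

instance : MulAction (SignedPerm n) (Profile n) where
  one_smul x := by ext <;> simp [diff_smul, phase_smul]
  mul_smul a b x := by
    have toAdd_left_mul (j) :
        toAdd ((a * b).left j) = toAdd (a.left j) + toAdd (b.left (a.right⁻¹ j)) := rfl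
    ext j
    · rw [diff_smul, diff_smul, diff_smul, toAdd_left_mul, mul_right, mul_inv_rev, Perm.mul_apply]
      ring
    · have reindex := Equiv.sum_comp a.right⁻¹ fun j ↦ toAdd (b.left j) * x.diff (b.right⁻¹ j)
      simp only [phase_smul, diff_smul, toAdd_left_mul, mul_right, mul_inv_rev, Perm.mul_apply,
        add_mul _ _ (x.diff _), mul_add (toAdd _), sum_add_distrib, reindex,
        mul_left_comm _ (n : ZMod 2), ← mul_sum]
      linear_combination
        -(∑ j, toAdd (a.left j) * toAdd (b.left (a.right⁻¹ j))) * add_one_mul_self_zmod_two n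

end Profile

section Rule105

variable {n : ℕ} [NeZero n]

/-- The update of the state `y` at `i` by the Wolfram rule 105. -/
def rule105 (i : Fin n) (y : Fin n → ZMod 2) : Fin n → ZMod 2 :=
  Function.update y i (1 + y (i - 1) + y i + y (i + 1))

theorem rule105_apply (i : Fin n) (y : Fin n → ZMod 2) (j : Fin n) :
    rule105 i y j = y j + if j = i then 1 + y (i - 1) + y (i + 1) else 0 := by
  rw [rule105, Function.update_apply]
  split_ifs with h
  · subst h; ring
  · ring

/-- The coordinates of a state. The levels `j` absorb the constant `1` of rule 105, and the phase is
the invariant `∑ j, y j * y (j + 1)` for odd `n` and `y 0` for even `n`. -/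
def profile (y : Fin n → ZMod 2) : Profile n where
  diff j := y j + y (j + 1) + j.val
  phase := n * ∑ j, y j * y (j + 1) + (n + 1) * y 0

theorem diff_profile_rule105 (hn : 1 < n) (i : Fin n) (y : Fin n → ZMod 2) :
    (profile (rule105 i y)).diff = (reflection i • profile y).diff := by
  funext j
  have hi : i - 1 ≠ i := sub_one_ne_self hn _
  have level := cast_val_sub_one i
  have perm_inv : (reflection i).right⁻¹ = swap (i - 1) i := swap_inv _ _
  simp only [Profile.diff_smul, profile, rule105_apply, toAdd_left_reflection,
    ← eq_sub_iff_add_eq, perm_inv]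
  rcases eq_or_ne j i with rfl | hji
  · simp only [↓reduceIte, hi.symm, swap_apply_right, sub_add_cancel]
    grind
  · rcases eq_or_ne j (i - 1) with rfl | hji'
    · simp only [↓reduceIte, hi, swap_apply_left, sub_add_cancel]
      grind
    · simp [swap_apply_of_ne_of_ne, *]

theorem sum_rule105_mul_rule105 (hn : 1 < n) (i : Fin n) (y : Fin n → ZMod 2) :
    ∑ j, rule105 i y j * rule105 i y (j + 1) = ∑ j, y j * y (j + 1) := by
  have hi : i - 1 ≠ i := sub_one_ne_self hn _
  have sq (a : ZMod 2) : a ^ 2 = a := ZMod.pow_card a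
  have expand : ∑ j, rule105 i y j * rule105 i y (j + 1)
      = ∑ j, y j * y (j + 1) + (1 + y (i - 1) + y (i + 1)) * (y (i - 1) + y (i + 1)) := by
    simp only [rule105_apply, ← eq_sub_iff_add_eq, mul_add, add_mul, sum_add_distrib, mul_ite,
      ite_mul, mul_zero, zero_mul, sum_ite_eq', mem_univ, if_true, hi, if_false]
    ring
  rw [expand]
  linear_combination sq (y (i - 1)) + sq (y (i + 1))
    + (y (i - 1) + y (i + 1) + y (i - 1) * y (i + 1)) * CharTwo.two_eq_zero (R := ZMod 2)

theorem sum_toAdd_left_reflection_mul (i : Fin n) (f : Fin n → ZMod 2) :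
    ∑ j, toAdd ((reflection i).left j) * f j = if i = 0 then f (i - 1) + f i else 0 := by
  simp only [toAdd_left_reflection, ite_mul, add_mul, one_mul, zero_mul]
  split_ifs <;> simp [sum_add_distrib]

theorem phase_profile_rule105 (hn : 1 < n) (i : Fin n) (y : Fin n → ZMod 2) :
    (profile (rule105 i y)).phase = (reflection i • profile y).phase := by
  rw [Profile.phase_smul, sum_toAdd_left_reflection_mul]
  simp only [profile, sum_rule105_mul_rule105 hn]
  rcases eq_or_ne i 0 with rfl | hi
  · have level := cast_val_sub_one (0 : Fin n)
    have perm_inv : (reflection (0 : Fin n)).right⁻¹ = swap (0 - 1) 0 := swap_inv _ _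
    simp only [perm_inv, rule105_apply, if_true, swap_apply_left, swap_apply_right,
      sub_add_cancel] at level ⊢
    linear_combination -(n + 1) * level - add_one_mul_self_zmod_two n
      + (n + 1) * (1 - y 0) * CharTwo.two_eq_zero (R := ZMod 2)
  · simp [hi, hi.symm, rule105_apply]

theorem profile_rule105 (hn : 1 < n) (i : Fin n) (y : Fin n → ZMod 2) :
    profile (rule105 i y) = reflection i • profile y :=
  Profile.ext (diff_profile_rule105 hn i y) (phase_profile_rule105 hn i y)

theorem phase_profile_add_const (y : Fin n → ZMod 2) (e : ZMod 2) :
    (profile fun j ↦ y j + e).phase = (profile y).phase + e := by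
  have sq (a : ZMod 2) : a ^ 2 = a := ZMod.pow_card a
  simp only [profile, add_mul, mul_add, sum_add_distrib, ← mul_sum, ← sum_mul, sum_apply_add_one,
    sum_const, card_univ, Fintype.card_fin, nsmul_eq_mul]
  linear_combination n ^ 2 * sq e + e * sq n
    + (n * e + n * e * ∑ j, y j) * CharTwo.two_eq_zero (R := ZMod 2)

theorem profile_injective : Function.Injective (profile (n := n)) := by
  intro y y' h
  have sub_const (j) : y' j - y j = y' 0 - y 0 := by
    refine eq_apply_zero_of_forall_eq_sub_one (f := fun j ↦ y' j - y j) (fun k ↦ ?_) j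
    have diff_eq : y (k - 1) + y (k - 1 + 1) + _ = y' (k - 1) + y' (k - 1 + 1) + _ :=
      congrFun (congrArg Profile.diff h) (k - 1)
    rw [sub_add_cancel] at diff_eq
    grind
  have y'_eq : y' = fun j ↦ y j + (y' 0 - y 0) := funext fun j ↦ by rw [← sub_const j]; ring
  have const_eq_zero : y' 0 - y 0 = 0 := by
    have phase_eq := congrArg Profile.phase h
    rwa [y'_eq, phase_profile_add_const, left_eq_add] at phase_eq
  simpa [const_eq_zero] using y'_eq.symm

theorem right_eq_one_of_smul_profile (hn : 1 < n) {w : SignedPerm n}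
    (hw : ∀ y : Fin n → ZMod 2, w • profile y = profile y) : w.right = 1 := by
  have one_ne_zero := fin_one_ne_zero hn
  suffices ∀ j, w.right⁻¹ j = j from inv_eq_one.1 (Perm.ext this)
  intro j
  have diff_eq (y : Fin n → ZMod 2) :
      y (w.right⁻¹ j) + y (w.right⁻¹ j + 1) + (w.right⁻¹ j).val + n * toAdd (w.left j)
        = y j + y (j + 1) + j.val := congrFun (congrArg Profile.diff (hw y)) j
  have level_eq : ((w.right⁻¹ j).val : ZMod 2) + n * toAdd (w.left j) = j.val := by
    simpa using diff_eq 0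
  generalize w.right⁻¹ j = a at diff_eq level_eq
  by_contra hne
  have edge_eq (y : Fin n → ZMod 2) : y a + y (a + 1) = y j + y (j + 1) := by
    linear_combination diff_eq y - level_eq
  have succ_a : a + 1 = j := by
    simpa [Pi.single_apply, hne, one_ne_zero] using edge_eq (Pi.single j 1)
  have succ_j : j + 1 = a := by
    simpa [Pi.single_apply, Ne.symm hne, one_ne_zero] using (edge_eq (Pi.single a 1)).symm
  have one_add_one : (1 + 1 : Fin n) = 0 := by
    rw [← add_eq_left (a := a), ← add_assoc, succ_a, succ_j]
  have n_dvd_two : n ∣ 2 := by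
    have val_eq := congrArg Fin.val one_add_one
    rw [Fin.val_add, Fin.val_one', Nat.mod_eq_of_lt hn] at val_eq
    exact Nat.dvd_of_mod_eq_zero val_eq
  obtain rfl : n = 2 := le_antisymm (Nat.le_of_dvd two_pos n_dvd_two) hn
  rw [CharP.cast_eq_zero (ZMod 2) 2, zero_mul, add_zero] at level_eq
  exact hne ((by decide : ∀ a j : Fin 2, (a.val : ZMod 2) = j.val → a = j) a j level_eq)

theorem toAdd_left_eq_of_smul_profile {w : SignedPerm n} (hright : w.right = 1)
    (hw : ∀ y : Fin n → ZMod 2, w • profile y = profile y) (k : Fin n) :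
    toAdd (w.left k) = toAdd (w.left 0) := by
  have mul_eq_zero (j) : n * toAdd (w.left j) = 0 := by
    simpa [Profile.diff_smul, hright] using congrFun (congrArg Profile.diff (hw 0)) j
  have sum_eq_zero (y : Fin n → ZMod 2) :
      (n + 1) * ∑ j, toAdd (w.left j) * (profile y).diff j = 0 := by
    simpa [Profile.phase_smul, hright] using congrArg Profile.phase (hw y)
  refine eq_apply_zero_of_forall_eq_sub_one (f := fun k ↦ toAdd (w.left k)) (fun k ↦ ?_) k
  have sum_single : (n + 1) * (toAdd (w.left k) + toAdd (w.left (k - 1))) = 0 := by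
    have h := congrArg₂ (· - ·) (sum_eq_zero (Pi.single k 1)) (sum_eq_zero 0)
    simpa [profile, mul_add, sum_add_distrib, Pi.single_apply, ← eq_sub_iff_add_eq] using h
  linear_combination sum_single - mul_eq_zero k - mul_eq_zero (k - 1)
    - toAdd (w.left (k - 1)) * CharTwo.two_eq_zero (R := ZMod 2)

theorem eq_one_or_eq_negOne_of_smul_profile (hn : 1 < n) {w : SignedPerm n}
    (hw : ∀ y : Fin n → ZMod 2, w • profile y = profile y) : w = 1 ∨ w = negOne := by
  have hright := right_eq_one_of_smul_profile hn hw
  have hleft := toAdd_left_eq_of_smul_profile hright hw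
  rcases (by decide : ∀ a : ZMod 2, a = 0 ∨ a = 1) (toAdd (w.left 0)) with h | h
  · exact .inl (SemidirectProduct.ext (funext fun k ↦ (hleft k).trans h) hright)
  · exact .inr (SemidirectProduct.ext (funext fun k ↦ (hleft k).trans h) hright)

theorem sum_diff_profile (y : Fin n → ZMod 2) :
    ∑ j, (profile y).diff j = (n * (n - 1) / 2 : ℕ) := by
  simp only [profile, sum_add_distrib, sum_apply_add_one, CharTwo.add_self_eq_zero, zero_add]
  rw [← Finset.sum_range_id, Nat.cast_sum, Fin.sum_univ_eq_sum_range fun j ↦ (j : ZMod 2)]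

theorem negOne_smul_profile_eq_iff (y : Fin n → ZMod 2) :
    (negOne : SignedPerm n) • profile y = profile y ↔ 4 ∣ n := by
  have diff_negOne_smul (j) :
      ((negOne : SignedPerm n) • profile y).diff j = (profile y).diff j + n := by
    simp [Profile.diff_smul, negOne]
  have phase_negOne_smul : ((negOne : SignedPerm n) • profile y).phase
      = (profile y).phase + (n + 1) * (n * (n - 1) / 2 : ℕ) := by
    simp [Profile.phase_smul, negOne, sum_diff_profile]
  rw [four_dvd_iff_cast_zmod_two, Profile.ext_iff, phase_negOne_smul, add_eq_left, funext_iff]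
  simp only [diff_negOne_smul, add_eq_left, forall_const]
  exact and_congr_right fun hn ↦ by rw [hn, zero_add, one_mul]

theorem fixingSubgroup_range_profile_eq_bot (hn : 1 < n) (h : ¬ 4 ∣ n) :
    fixingSubgroup (SignedPerm n) (Set.range (profile (n := n))) = ⊥ := by
  refine (Subgroup.eq_bot_iff_forall _).2 fun w hw ↦ ?_
  simp only [mem_fixingSubgroup_iff, Set.forall_mem_range] at hw
  refine (eq_one_or_eq_negOne_of_smul_profile hn hw).resolve_right ?_
  rintro rfl
  exact h ((negOne_smul_profile_eq_iff 0).1 (hw 0))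

theorem fixingSubgroup_range_profile_eq_zpowers (hn : 1 < n) (h : 4 ∣ n) :
    fixingSubgroup (SignedPerm n) (Set.range (profile (n := n))) = Subgroup.zpowers negOne := by
  refine le_antisymm (fun w hw ↦ ?_) ?_
  · simp only [mem_fixingSubgroup_iff, Set.forall_mem_range] at hw
    rcases eq_one_or_eq_negOne_of_smul_profile hn hw with rfl | rfl
    · exact one_mem _
    · exact Subgroup.mem_zpowers _
  · simp only [Subgroup.zpowers_le, mem_fixingSubgroup_iff, Set.forall_mem_range]
    exact fun y ↦ (negOne_smul_profile_eq_iff y).2 h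

end Rule105

theorem stmt_9_general {n : ℕ} [NeZero n] (hn : 1 < n)
    (Q : Fin n → Equiv.Perm (Fin n → ZMod 2))
    (hQ : ∀ (i : Fin n) (y : Fin n → ZMod 2),
      Q i y = Function.update y i (1 + y (i - 1) + y i + y (i + 1))) :
    (¬ (4 ∣ n) → Nat.card ↥(Subgroup.closure (Set.range Q))
      = 2 ^ (n - 1) * Nat.factorial n) ∧
    ((4 ∣ n) → Nat.card ↥(Subgroup.closure (Set.range Q))
      = 2 ^ (n - 2) * Nat.factorial n) := by
  have equivariant (i y) : profile (Q i y) = reflection i • profile y :=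
    hQ i y ▸ profile_rule105 hn i y
  have card_eq := card_closure_range_eq_relIndex profile_injective reflection Q equivariant
  have card_reflection := card_closure_range_reflection hn
  rw [card_eq]
  refine ⟨fun h ↦ ?_, fun h ↦ ?_⟩
  · rw [fixingSubgroup_range_profile_eq_bot hn h, Subgroup.relIndex_bot_left, card_reflection]
  · have zpowers_le : Subgroup.zpowers negOne ≤
        Subgroup.closure (Set.range (reflection (n := n))) := by
      rw [Subgroup.zpowers_le, closure_range_reflection hn]
      exact negOne_mem_ker_entryProd (even_iff_two_dvd.2 (dvd_trans (by norm_num) h))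
    have card_mul := Subgroup.relIndex_mul_relIndex ⊥ _ _ bot_le zpowers_le
    rw [Subgroup.relIndex_bot_left, Subgroup.relIndex_bot_left, Nat.card_zpowers, orderOf_negOne,
      card_reflection, show n - 1 = n - 2 + 1 by omega, pow_succ', mul_assoc] at card_mul
    rw [fixingSubgroup_range_profile_eq_zpowers hn h]
    exact Nat.eq_of_mul_eq_mul_left two_pos card_mul

/-- The order of the dynamics group of Wolfram rule 105 (each local
function replaces `y i` by `1 + y (i-1) + y i + y (i+1)`) is `2^(n-1) * n!` when
`4 ∤ n` and `2^(n-2) * n!` when `4 ∣ n`. -/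
theorem stmt_9 {n : ℕ} [NeZero n] (hn : 3 < n)
    (Q : Fin n → Equiv.Perm (Fin n → ZMod 2))
    (hQ : ∀ (i : Fin n) (y : Fin n → ZMod 2),
      Q i y = Function.update y i (1 + y (i - 1) + y i + y (i + 1))) :
    (¬ (4 ∣ n) → Nat.card ↥(Subgroup.closure (Set.range Q))
      = 2 ^ (n - 1) * Nat.factorial n) ∧
    ((4 ∣ n) → Nat.card ↥(Subgroup.closure (Set.range Q))
      = 2 ^ (n - 2) * Nat.factorial n) :=
  stmt_9_general (by omega) Q hQ
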